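/- arXiv:2209.08043 — 2 statements merged into one kernel-verified Lean document; each statement's English description precedes it below -/
import Mathlib

section
/- Let F be a field with char F ≠ 2 and let β ∈ F be such that 1, 0, 2β, β are pairwise distinct. Then every 2-generated axial algebra of Monster type (2β, β) over F has dimension at most 8 as an F-vector space. -/
/- STATEMENT 1: dimension bound for 2-generated axial algebras of
Monster type (2β, β). -/

variable (F : Type*) [Field F] (A : Type*) [NonUnitalNonAssocCommRing A]
  [Module F A] [SMulCommClass F A A] [IsScalarTower F A A]

/-- The `μ`-eigenspace of the left multiplication operator by `a`. -/
def axEig (a : A) (μ : F) : Submodule F A where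
  carrier := {x | a * x = μ • x}
  zero_mem' := by simp
  add_mem' := fun hx hy => by
    simp only [Set.mem_setOf_eq] at *
    rw [mul_add, hx, hy, smul_add]
  smul_mem' := fun c x hx => by
    simp only [Set.mem_setOf_eq] at *
    rw [mul_smul_comm, hx, smul_smul, smul_smul, mul_comm]

/-- `a` is a primitive axis of Monster type `(α, β)`: an idempotent such that the algebra
is the internal direct sum of the eigenspaces `A_1 ⊕ A_0 ⊕ A_α ⊕ A_β` of ad(a), with
`A_1 = F·a`, and the eigenspaces multiply according to the fusion law `M(α, β)`. -/
structure IsPrimitiveMonsterAxis (α β : F) (a : A) : Prop where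
  idem : a * a = a
  decomp : DirectSum.IsInternal
    (![axEig F A a 1, axEig F A a 0, axEig F A a α, axEig F A a β] : Fin 4 → Submodule F A)
  primitive : axEig F A a 1 = Submodule.span F {a}
  f11 : ∀ x ∈ axEig F A a 1, ∀ y ∈ axEig F A a 1, x * y ∈ axEig F A a 1
  f10 : ∀ x ∈ axEig F A a 1, ∀ y ∈ axEig F A a 0, x * y = 0
  f1a : ∀ x ∈ axEig F A a 1, ∀ y ∈ axEig F A a α, x * y ∈ axEig F A a α
  f1b : ∀ x ∈ axEig F A a 1, ∀ y ∈ axEig F A a β, x * y ∈ axEig F A a β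
  f00 : ∀ x ∈ axEig F A a 0, ∀ y ∈ axEig F A a 0, x * y ∈ axEig F A a 0
  f0a : ∀ x ∈ axEig F A a 0, ∀ y ∈ axEig F A a α, x * y ∈ axEig F A a α
  f0b : ∀ x ∈ axEig F A a 0, ∀ y ∈ axEig F A a β, x * y ∈ axEig F A a β
  faa : ∀ x ∈ axEig F A a α, ∀ y ∈ axEig F A a α, x * y ∈ axEig F A a 1 ⊔ axEig F A a 0
  fab : ∀ x ∈ axEig F A a α, ∀ y ∈ axEig F A a β, x * y ∈ axEig F A a β
  fbb : ∀ x ∈ axEig F A a β, ∀ y ∈ axEig F A a β,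
    x * y ∈ axEig F A a 1 ⊔ axEig F A a 0 ⊔ axEig F A a α

/-- `A` is a 2-generated axial algebra of Monster type `(α, β)`:
it is generated as an `F`-algebra by two primitive axes of Monster type `(α, β)`. -/
def IsTwoGeneratedMonsterType (α β : F) : Prop :=
  ∃ a b : A, IsPrimitiveMonsterAxis F A α β a ∧ IsPrimitiveMonsterAxis F A α β b ∧
    NonUnitalAlgebra.adjoin F ({a, b} : Set A) = ⊤

/-!
The Miyamoto involutions of the two generating axes arrange the axes they produce in a sequence
`a_i`, `i ∈ ℤ`, on which the involution of `a_i` acts as the reflection `j ↦ 2i - j`. Write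
`s_{i,j} = a_i a_j - β (a_i + a_j)`; these reflections make all `s_{i,i+1}` equal to `s_{0,1}`.

Because `α = 2β`, every `s_{i,j}` equals `β (v - u)` up to a multiple of `a_i`, where `u` and `v`
are the components of `a_j` in the `0`- and `2β`-eigenspaces of `a_i`. In the product of `s_{i,j}`
with `a_j + a_{2i-j}` the mixed term `u v` therefore cancels, and this determines `a_i a_{i+2}` in
terms of `a_{i-2}, …, a_{i+2}` and `s_{0,1}`. Comparing the formulas for `a_i a_{i+2}` and
`a_{i+2} a_i` gives a recurrence of order six for the axes. Likewise `4 s_{0,1}²`, computed at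
`a_i`, equals `β² s_{i,i+3}` modulo the axes and `s_{0,1}`, so modulo these `s_{i,i+3}`
is independent of `i`. Hence six consecutive axes together with `s_{0,1}` and `s_{0,3}` span a
subalgebra.
-/

section ReflectionSequence

open scoped Quandles

variable {Q : Type*} [Quandle Q]

/-- A bi-infinite sequence in a quandle on which the action of the `i`-th term is the reflection
of the indices in `i`: the orbit of two generators under the infinite dihedral group. -/
def IsReflectionSequence (a : ℤ → Q) : Prop :=
  ∀ i j, a i ◃ a j = a (2 * i - j)

lemma isReflectionSequence_of_act_eq_add_two (hQ : Rack.IsInvolutory Q) {a : ℤ → Q}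
    (ha : ∀ i, a (i + 1) ◃ a i = a (i + 2)) : IsReflectionSequence a := by
  have act_add_two (i : ℤ) : a (i + 1) ◃ a (i + 2) = a i := by rw [← ha, hQ]
  suffices h : ∀ i j, a i ◃ a j = a (2 * i - j) ∧ a i ◃ a (j + 1) = a (2 * i - (j + 1)) from
    fun i j ↦ (h i j).1
  intro i j
  induction j using Int.inductionOn' (b := i) with
  | zero =>
    have := act_add_two (i - 1)
    grind [Quandle.fix]
  | succ k _ ih =>
    refine ⟨ih.2, ?_⟩
    rw [add_assoc, one_add_one_eq_two, ← ha, Shelf.self_distrib, ih.1, ih.2]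
    convert act_add_two (2 * i - (k + 2)) using 2 <;> ring_nf
  | pred k _ ih =>
    rw [sub_add_cancel]
    refine ⟨?_, ih.1⟩
    have := act_add_two (k - 1)
    rw [show k - 1 + 1 = k by ring, show k - 1 + 2 = k + 1 by ring] at this
    rw [← this, Shelf.self_distrib, ih.1, ih.2]
    convert ha (2 * i - (k + 1)) using 2 <;> ring_nf

lemma exists_isReflectionSequence (hQ : Rack.IsInvolutory Q) (x y : Q) :
    ∃ a : ℤ → Q, IsReflectionSequence a ∧ a 0 = x ∧ a 1 = y := by
  let shift : Equiv.Perm (Q × Q) :=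
    { toFun := fun p ↦ (p.2, p.2 ◃ p.1)
      invFun := fun p ↦ (p.1 ◃ p.2, p.1)
      left_inv := fun p ↦ by simp [hQ p.2 p.1]
      right_inv := fun p ↦ by simp [hQ p.1 p.2] }
  have zpow_succ_apply (i : ℤ) : (shift ^ (i + 1)) (x, y) = shift ((shift ^ i) (x, y)) := by
    rw [add_comm, zpow_one_add, Equiv.Perm.mul_apply]
  refine ⟨fun i ↦ ((shift ^ i) (x, y)).1, isReflectionSequence_of_act_eq_add_two hQ fun i ↦ ?_,
    rfl, rfl⟩
  simp only [← one_add_one_eq_two, ← add_assoc, zpow_succ_apply, shift, Equiv.coe_fn_mk]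

end ReflectionSequence

section Axes

open Submodule
open scoped Quandles

variable {F A}

omit [IsScalarTower F A A]

lemma mem_axEig {e x : A} {μ : F} : x ∈ axEig F A e μ ↔ e * x = μ • x := Iff.rfl

lemma mem_axEig_zero {e x : A} : x ∈ axEig F A e 0 ↔ e * x = 0 := by
  rw [mem_axEig, zero_smul]

/-- The even part `A_1 ⊕ A_0 ⊕ A_α` of the `ℤ/2`-grading that the fusion law `M(α, β)` induces
at an axis `e`; the odd part is the `β`-eigenspace. -/
def evenPart (α : F) (e : A) : Submodule F A :=
  axEig F A e 1 ⊔ axEig F A e 0 ⊔ axEig F A e α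

lemma exists_add_add_of_mem_evenPart {α : F} {e x : A} (hx : x ∈ evenPart α e) :
    ∃ p ∈ axEig F A e 1, ∃ u ∈ axEig F A e 0, ∃ v ∈ axEig F A e α, p + u + v = x := by
  obtain ⟨_, hpu, v, hv, rfl⟩ := mem_sup.1 hx
  obtain ⟨p, hp, u, hu, rfl⟩ := mem_sup.1 hpu
  exact ⟨p, hp, u, hu, v, hv, rfl⟩

namespace IsPrimitiveMonsterAxis

variable {α β : F} {e : A}

lemma self_mem_evenPart (he : IsPrimitiveMonsterAxis F A α β e) : e ∈ evenPart α e :=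
  mem_sup_left (mem_sup_left (he.primitive ▸ mem_span_singleton_self e))

lemma isCompl_evenPart (he : IsPrimitiveMonsterAxis F A α β e) :
    IsCompl (evenPart α e) (axEig F A e β) where
  disjoint := (he.decomp.submodule_iSupIndep 3).symm.mono_left <|
    sup_le (sup_le (le_iSup₂_of_le 0 (by decide) le_rfl) (le_iSup₂_of_le 1 (by decide) le_rfl))
      (le_iSup₂_of_le 2 (by decide) le_rfl)
  codisjoint := by
    rw [codisjoint_iff_le_sup, ← he.decomp.submodule_iSup_eq_top]
    refine iSup_le fun i ↦ ?_
    fin_cases i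
    exacts [le_sup_of_le_left (le_sup_of_le_left le_sup_left),
      le_sup_of_le_left (le_sup_of_le_left le_sup_right), le_sup_of_le_left le_sup_right,
      le_sup_right]

lemma mul_mem_evenPart (he : IsPrimitiveMonsterAxis F A α β e) {x y : A}
    (hx : x ∈ evenPart α e) (hy : y ∈ evenPart α e) : x * y ∈ evenPart α e := by
  obtain ⟨p, hp, u, hu, v, hv, rfl⟩ := exists_add_add_of_mem_evenPart hx
  obtain ⟨p', hp', u', hu', v', hv', rfl⟩ := exists_add_add_of_mem_evenPart hy
  have h10 : p * p' + u * u' + v * v' ∈ axEig F A e 1 ⊔ axEig F A e 0 :=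
    add_mem (add_mem (mem_sup_left (he.f11 p hp p' hp')) (mem_sup_right (he.f00 u hu u' hu')))
      (he.faa v hv v' hv')
  have hα : p * v' + u * v' + (p' * v + u' * v) ∈ axEig F A e α :=
    add_mem (add_mem (he.f1a p hp v' hv') (he.f0a u hu v' hv'))
      (add_mem (he.f1a p' hp' v hv) (he.f0a u' hu' v hv))
  have expand : (p + u + v) * (p' + u' + v') =
      p * p' + u * u' + v * v' + (p * v' + u * v' + (p' * v + u' * v)) := by
    simp only [add_mul, mul_add, he.f10 p hp u' hu', mul_comm u p', he.f10 p' hp' u hu,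
      mul_comm v p', mul_comm v u']
    abel
  exact expand ▸ add_mem (mem_sup_left h10) (mem_sup_right hα)

lemma mul_mem_axEig (he : IsPrimitiveMonsterAxis F A α β e) {x y : A}
    (hx : x ∈ evenPart α e) (hy : y ∈ axEig F A e β) : x * y ∈ axEig F A e β := by
  obtain ⟨p, hp, u, hu, v, hv, rfl⟩ := exists_add_add_of_mem_evenPart hx
  rw [add_mul, add_mul]
  exact add_mem (add_mem (he.f1b p hp y hy) (he.f0b u hu y hy)) (he.fab v hv y hy)

/-- The Miyamoto involution `τ_e`: the identity on the even part and `-1` on the `β`-eigenspace. -/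
noncomputable def miyamoto (he : IsPrimitiveMonsterAxis F A α β e) : A ≃ₗ[F] A :=
  (prodEquivOfIsCompl _ _ he.isCompl_evenPart).symm ≪≫ₗ
    (LinearEquiv.refl F _).prodCongr (LinearEquiv.neg F) ≪≫ₗ
    prodEquivOfIsCompl _ _ he.isCompl_evenPart

lemma exists_even_add_odd (he : IsPrimitiveMonsterAxis F A α β e) (x : A) :
    ∃ y ∈ evenPart α e, ∃ z ∈ axEig F A e β, y + z = x :=
  mem_sup.1 (he.isCompl_evenPart.sup_eq_top ▸ mem_top)

lemma miyamoto_add (he : IsPrimitiveMonsterAxis F A α β e) {x y : A}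
    (hx : x ∈ evenPart α e) (hy : y ∈ axEig F A e β) : he.miyamoto (x + y) = x - y := by
  have : (prodEquivOfIsCompl _ _ he.isCompl_evenPart).symm (x + y) = (⟨x, hx⟩, ⟨y, hy⟩) :=
    (LinearEquiv.symm_apply_eq _).2 (by simp)
  simp [miyamoto, this, sub_eq_add_neg]

lemma miyamoto_of_mem_evenPart (he : IsPrimitiveMonsterAxis F A α β e) {x : A}
    (hx : x ∈ evenPart α e) : he.miyamoto x = x := by
  simpa using he.miyamoto_add hx (zero_mem _)

lemma miyamoto_involutive (he : IsPrimitiveMonsterAxis F A α β e) :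
    Function.Involutive he.miyamoto := by
  intro x
  obtain ⟨y, hy, z, hz, rfl⟩ := he.exists_even_add_odd x
  rw [he.miyamoto_add hy hz, sub_eq_add_neg, he.miyamoto_add hy (neg_mem hz), sub_neg_eq_add]

lemma miyamoto_mul (he : IsPrimitiveMonsterAxis F A α β e) (x y : A) :
    he.miyamoto (x * y) = he.miyamoto x * he.miyamoto y := by
  obtain ⟨x₀, hx₀, x₁, hx₁, rfl⟩ := he.exists_even_add_odd x
  obtain ⟨y₀, hy₀, y₁, hy₁, rfl⟩ := he.exists_even_add_odd y
  have heven : x₀ * y₀ + x₁ * y₁ ∈ evenPart α e :=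
    add_mem (he.mul_mem_evenPart hx₀ hy₀) (he.fbb x₁ hx₁ y₁ hy₁)
  have hodd : x₀ * y₁ + y₀ * x₁ ∈ axEig F A e β :=
    add_mem (he.mul_mem_axEig hx₀ hy₁) (he.mul_mem_axEig hy₀ hx₁)
  calc he.miyamoto ((x₀ + x₁) * (y₀ + y₁))
      = he.miyamoto ((x₀ * y₀ + x₁ * y₁) + (x₀ * y₁ + y₀ * x₁)) := by
        rw [mul_comm y₀ x₁, add_mul, mul_add, mul_add]; congr 1; abel
    _ = (x₀ * y₀ + x₁ * y₁) - (x₀ * y₁ + y₀ * x₁) := he.miyamoto_add heven hodd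
    _ = he.miyamoto (x₀ + x₁) * he.miyamoto (y₀ + y₁) := by
        rw [he.miyamoto_add hx₀ hx₁, he.miyamoto_add hy₀ hy₁, mul_comm y₀ x₁, sub_mul, mul_sub,
          mul_sub]
        abel

lemma miyamoto_self (he : IsPrimitiveMonsterAxis F A α β e) : he.miyamoto e = e :=
  he.miyamoto_of_mem_evenPart he.self_mem_evenPart

end IsPrimitiveMonsterAxis

section Transport

variable {B : Type*} [NonUnitalNonAssocCommRing B] [Module F B] [SMulCommClass F B B]
  {g : A ≃ₗ[F] B} {α β : F} {e : A}

lemma map_axEig (hg : ∀ x y, g (x * y) = g x * g y) (e : A) (μ : F) :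
    (axEig F A e μ).map (g : A →ₗ[F] B) = axEig F B (g e) μ := by
  ext y
  obtain ⟨x, rfl⟩ := g.surjective y
  simp [mem_axEig, ← hg, ← map_smul]

lemma map_evenPart (hg : ∀ x y, g (x * y) = g x * g y) (α : F) (e : A) :
    (evenPart α e).map (g : A →ₗ[F] B) = evenPart α (g e) := by
  simp only [evenPart, Submodule.map_sup, map_axEig hg]

lemma IsPrimitiveMonsterAxis.map (he : IsPrimitiveMonsterAxis F A α β e)
    (hg : ∀ x y, g (x * y) = g x * g y) : IsPrimitiveMonsterAxis F B α β (g e) := by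
  have decomp : (![axEig F B (g e) 1, axEig F B (g e) 0, axEig F B (g e) α, axEig F B (g e) β] :
      Fin 4 → Submodule F B) = fun i ↦ orderIsoMapComap g
        ((![axEig F A e 1, axEig F A e 0, axEig F A e α, axEig F A e β] :
          Fin 4 → Submodule F A) i) := by
    funext i
    fin_cases i <;> exact (map_axEig hg _ _).symm
  have fusion {P Q R : Submodule F A} (h : ∀ x ∈ P, ∀ y ∈ Q, x * y ∈ R) :
      ∀ x ∈ P.map (g : A →ₗ[F] B), ∀ y ∈ Q.map (g : A →ₗ[F] B),
        x * y ∈ R.map (g : A →ₗ[F] B) := by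
    rintro _ ⟨x, hx, rfl⟩ _ ⟨y, hy, rfl⟩
    exact ⟨x * y, h x hx y hy, hg x y⟩
  constructor
  · rw [← hg, he.idem]
  · rw [decomp, DirectSum.isInternal_submodule_iff_iSupIndep_and_iSup_eq_top]
    exact ⟨he.decomp.submodule_iSupIndep.map_orderIso (orderIsoMapComap g), by
      rw [← OrderIso.map_iSup, he.decomp.submodule_iSup_eq_top, OrderIso.map_top]⟩
  · rw [← map_axEig hg, he.primitive, map_span, Set.image_singleton]
    rfl
  all_goals simp only [← map_axEig hg, ← Submodule.map_sup]
  exacts [fusion he.f11, by simpa using fusion (R := ⊥) (by simpa using he.f10), fusion he.f1a,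
    fusion he.f1b, fusion he.f00, fusion he.f0a, fusion he.f0b, fusion he.faa, fusion he.fab,
    fusion he.fbb]

lemma IsPrimitiveMonsterAxis.map_miyamoto (he : IsPrimitiveMonsterAxis F A α β e)
    (hg : ∀ x y, g (x * y) = g x * g y) (x : A) :
    g (he.miyamoto x) = (he.map hg).miyamoto (g x) := by
  obtain ⟨y, hy, z, hz, rfl⟩ := he.exists_even_add_odd x
  have hgy : g y ∈ evenPart α (g e) := map_evenPart hg α e ▸ mem_map_of_mem hy
  have hgz : g z ∈ axEig F B (g e) β := map_axEig hg e β ▸ mem_map_of_mem hz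
  rw [he.miyamoto_add hy hz, map_sub, map_add, (he.map hg).miyamoto_add hgy hgz]

end Transport

/-- The primitive axes of Monster type `(α, β)`, on which the Miyamoto involutions act. -/
abbrev MonsterAxis (A : Type*) [NonUnitalNonAssocCommRing A] [Module F A] [SMulCommClass F A A]
    (α β : F) : Type _ :=
  {e : A // IsPrimitiveMonsterAxis F A α β e}

namespace MonsterAxis

variable {α β : F}

/-- Axes form a quandle in which `e ◃ f` is the image of `f` under the Miyamoto involution of
`e`. -/
noncomputable instance : Quandle (MonsterAxis A α β) where
  act e f := ⟨e.2.miyamoto f, f.2.map e.2.miyamoto_mul⟩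
  self_distrib {e f _} := Subtype.ext (f.2.map_miyamoto e.2.miyamoto_mul _)
  invAct e f := ⟨e.2.miyamoto f, f.2.map e.2.miyamoto_mul⟩
  left_inv e f := Subtype.ext (e.2.miyamoto_involutive f)
  right_inv e f := Subtype.ext (e.2.miyamoto_involutive f)
  fix {e} := Subtype.ext e.2.miyamoto_self

lemma isInvolutory : Rack.IsInvolutory (MonsterAxis A α β) :=
  fun e f ↦ Subtype.ext (e.2.miyamoto_involutive f)

end MonsterAxis

end Axes

section AxisIdentities

variable {F A}

/-- The element `s_{x,y} = x * y - β • (x + y)` attached to a pair of axes in the literature. -/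
def axisDefect (β : F) (x y : A) : A :=
  x * y - β • (x + y)

omit [SMulCommClass F A A] [IsScalarTower F A A] in
lemma axisDefect_comm (β : F) (x y : A) : axisDefect β x y = axisDefect β y x := by
  rw [axisDefect, axisDefect, mul_comm, add_comm]

omit [SMulCommClass F A A] [IsScalarTower F A A] in
lemma mul_eq_axisDefect_add (β : F) (x y : A) : x * y = axisDefect β x y + β • (x + y) :=
  (sub_add_cancel _ _).symm

omit [SMulCommClass F A A] [IsScalarTower F A A] in
lemma map_axisDefect {B : Type*} [NonUnitalNonAssocCommRing B] [Module F B] {g : A ≃ₗ[F] B}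
    (hg : ∀ x y, g (x * y) = g x * g y) (β : F) (x y : A) :
    g (axisDefect β x y) = axisDefect β (g x) (g y) := by
  rw [axisDefect, map_sub, hg, map_smul, map_add, axisDefect]

namespace IsPrimitiveMonsterAxis

section

omit [IsScalarTower F A A]

variable {α β : F} {e : A}

lemma exists_eigen_decomp (he : IsPrimitiveMonsterAxis F A α β e) (x : A) :
    ∃ c : F, ∃ u ∈ axEig F A e 0, ∃ v ∈ axEig F A e α, ∃ w ∈ axEig F A e β,
      x = c • e + u + v + w ∧ he.miyamoto x = c • e + u + v - w := by
  obtain ⟨y, hy, w, hw, rfl⟩ := he.exists_even_add_odd x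
  rw [he.miyamoto_add hy hw]
  obtain ⟨p, hp, u, hu, v, hv, rfl⟩ := exists_add_add_of_mem_evenPart hy
  obtain ⟨c, rfl⟩ := Submodule.mem_span_singleton.1 (he.primitive ▸ hp)
  exact ⟨c, u, hu, v, hv, w, hw, rfl, rfl⟩

lemma axisDefect_miyamoto (he : IsPrimitiveMonsterAxis F A α β e) (x : A) :
    axisDefect β e (he.miyamoto x) = axisDefect β e x := by
  obtain ⟨y, hy, z, hz, rfl⟩ := he.exists_even_add_odd x
  rw [he.miyamoto_add hy hz, axisDefect, axisDefect, mul_sub, mul_add, mem_axEig.1 hz]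
  module

lemma mul_sub_miyamoto (he : IsPrimitiveMonsterAxis F A α β e) (x : A) :
    e * (x - he.miyamoto x) = β • (x - he.miyamoto x) := by
  have h := he.axisDefect_miyamoto x
  rw [axisDefect, axisDefect] at h
  rw [mul_sub]
  linear_combination (norm := module) -h

lemma exists_mul_mul_self_eq_smul (he : IsPrimitiveMonsterAxis F A α β e) {v v' : A}
    (hv : v ∈ axEig F A e α) (hv' : v' ∈ axEig F A e α) : ∃ k : F, e * (v * v') = k • e := by
  obtain ⟨p, hp, z, hz, h⟩ := Submodule.mem_sup.1 (he.faa v hv v' hv')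
  obtain ⟨k, rfl⟩ := Submodule.mem_span_singleton.1 (he.primitive ▸ hp)
  exact ⟨k, by rw [← h, mul_add, mul_smul_comm, he.idem, mem_axEig_zero.1 hz, add_zero]⟩

end

variable {β : F} {e : A}

omit [IsScalarTower F A A] in
lemma exists_symm_decomp (he : IsPrimitiveMonsterAxis F A (2 * β) β e) (x : A) :
    ∃ c t : F, ∃ u ∈ axEig F A e 0, ∃ v ∈ axEig F A e (2 * β),
      x + he.miyamoto x = (2 : F) • (c • e + u + v) ∧
        axisDefect β e x = t • e + β • (v - u) := by
  obtain ⟨c, u, hu, v, hv, w, hw, hx, hτx⟩ := he.exists_eigen_decomp x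
  refine ⟨c, c - β - β * c, u, hu, v, hv, by rw [hτx, hx]; module, ?_⟩
  rw [axisDefect, hx, mul_add, mul_add, mul_add, mul_smul_comm, he.idem, mem_axEig_zero.1 hu,
    mem_axEig.1 hv, mem_axEig.1 hw]
  module

omit [IsScalarTower F A A] in
lemma exists_two_smul_mul_axisDefect (he : IsPrimitiveMonsterAxis F A (2 * β) β e) (x : A) :
    ∃ c : F, (2 : F) • (e * axisDefect β e x) = β • (e * (x + he.miyamoto x)) + c • e := by
  obtain ⟨c, t, u, hu, v, hv, hx, hs⟩ := he.exists_symm_decomp x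
  refine ⟨2 * t - 2 * β * c, ?_⟩
  simp only [hx, hs, mul_add, mul_sub, mul_smul_comm, he.idem, mem_axEig_zero.1 hu,
    mem_axEig.1 hv]
  module

-- The resurrection principle: the product `u * v` in the `2β`-eigenspace, about which nothing else
-- is known, cancels from `(v + u) * (v - u)`.
lemma exists_mul_mul_axisDefect (he : IsPrimitiveMonsterAxis F A (2 * β) β e) (x : A) :
    ∃ d c : F, e * ((x + he.miyamoto x) * axisDefect β e x) =
      d • (e * (x + he.miyamoto x)) + c • e := by
  obtain ⟨c, t, u, hu, v, hv, hx, hs⟩ := he.exists_symm_decomp x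
  obtain ⟨k, hvv⟩ := he.exists_mul_mul_self_eq_smul hv hv
  have huu := mem_axEig_zero.1 (he.f00 u hu u hu)
  rw [mem_axEig_zero] at hu
  rw [mem_axEig] at hv
  have product : (x + he.miyamoto x) * axisDefect β e x =
      (2 * c * t) • e + (2 * β) • (v * v - u * u) + (4 * β * (β * c + t)) • v := by
    simp only [hx, hs, mul_add, mul_sub, add_mul, smul_mul_assoc, mul_smul_comm, he.idem,
      mul_comm u e, mul_comm v e, mul_comm v u, hu, hv]
    module
  refine ⟨2 * β * (β * c + t), 2 * (c * t + β * k) - 4 * β * (β * c + t) * c, ?_⟩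
  rw [product, hx]
  simp only [mul_add, mul_sub, mul_smul_comm, he.idem, hu, hv, hvv, huu]
  module

lemma exists_axisDefect_mul_axisDefect (he : IsPrimitiveMonsterAxis F A (2 * β) β e) (x y : A) :
    ∃ c d d' : F, (4 : F) • (axisDefect β e x * axisDefect β e y) +
        β • (e * ((x + he.miyamoto x) * (y + he.miyamoto y))) =
      β ^ 2 • ((x + he.miyamoto x) * (y + he.miyamoto y)) + c • e +
        d • (e * (x + he.miyamoto x)) + d' • (e * (y + he.miyamoto y)) := by
  obtain ⟨c, t, u, hu, v, hv, hx, hs⟩ := he.exists_symm_decomp x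
  obtain ⟨c', t', u', hu', v', hv', hy, hs'⟩ := he.exists_symm_decomp y
  obtain ⟨k, hvv⟩ := he.exists_mul_mul_self_eq_smul hv hv'
  have huu := mem_axEig_zero.1 (he.f00 u hu u' hu')
  have huv := mem_axEig.1 (he.f0a u hu v' hv')
  have hvu := mem_axEig.1 (he.f0a u' hu' v hv)
  rw [mem_axEig_zero] at hu hu'
  rw [mem_axEig] at hv hv'
  refine ⟨4 * (t * t' - β * (c * t' + c' * t) + β * k + β * (1 - 3 * β) * c * c'),
    2 * β * t' + 2 * β ^ 2 * c', 2 * β * t + 2 * β ^ 2 * c, ?_⟩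
  simp only [hx, hy, hs, hs', mul_add, mul_sub, add_mul, sub_mul, smul_mul_assoc, mul_smul_comm,
    he.idem, mul_comm u e, mul_comm v e, mul_comm v u', hu, hu', hv, hv', hvv, huu, huv, hvu,
    mul_zero]
  module

end IsPrimitiveMonsterAxis

end AxisIdentities

section Sequence

variable {F A} {α β : F}

/-- The element `s_{0,n}` attached to a sequence of axes. -/
def seqDefect (a : ℤ → MonsterAxis A α β) (n : ℤ) : A :=
  axisDefect β (a 0 : A) (a n)

namespace IsReflectionSequence

section GeneralType

omit [IsScalarTower F A A]

variable {a : ℤ → MonsterAxis A α β}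

lemma miyamoto_apply (ha : IsReflectionSequence a) (i j : ℤ) :
    (a i).2.miyamoto (a j) = a (2 * i - j) :=
  congrArg Subtype.val (ha i j)

lemma miyamoto_add (ha : IsReflectionSequence a) (i k : ℤ) :
    (a i).2.miyamoto (a (i + k)) = a (i - k) := by
  rw [ha.miyamoto_apply]; ring_nf

lemma axisDefect_sub (ha : IsReflectionSequence a) (i k : ℤ) :
    axisDefect β (a i : A) (a (i - k)) = axisDefect β (a i : A) (a (i + k)) := by
  rw [← ha.miyamoto_add, (a i).2.axisDefect_miyamoto]

lemma axisDefect_add_one (ha : IsReflectionSequence a) (i : ℤ) :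
    axisDefect β (a i : A) (a (i + 1)) = seqDefect a 1 := by
  have step (i : ℤ) : axisDefect β (a (i + 1) : A) (a (i + 1 + 1)) =
      axisDefect β (a i : A) (a (i + 1)) := by
    rw [← ha.axisDefect_sub, add_sub_cancel_right, axisDefect_comm]
  induction i using Int.induction_on with
  | zero => rfl
  | succ i ih => rw [step, ih]
  | pred i ih => rw [← ih, ← step, sub_add_cancel]

lemma mul_add_one (ha : IsReflectionSequence a) (i : ℤ) :
    (a i * a (i + 1) : A) = seqDefect a 1 + β • (a i + a (i + 1) : A) := by
  rw [← ha.axisDefect_add_one i, ← mul_eq_axisDefect_add]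

lemma mul_sub_one (ha : IsReflectionSequence a) (i : ℤ) :
    (a i * a (i - 1) : A) = seqDefect a 1 + β • (a i + a (i - 1) : A) := by
  rw [← ha.axisDefect_add_one i, ← ha.axisDefect_sub, ← mul_eq_axisDefect_add]

lemma miyamoto_seqDefect_one (ha : IsReflectionSequence a) (i : ℤ) :
    (a i).2.miyamoto (seqDefect a 1) = seqDefect a 1 := by
  rw [← ha.axisDefect_add_one i, map_axisDefect (a i).2.miyamoto_mul, (a i).2.miyamoto_self,
    ha.miyamoto_add, ha.axisDefect_sub]

end GeneralType

variable {a : ℤ → MonsterAxis A (2 * β) β}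

omit [IsScalarTower F A A] in
lemma exists_two_smul_mul_seqDefect_one (ha : IsReflectionSequence a) (i : ℤ) :
    ∃ c : F, (2 : F) • (a i * seqDefect a 1 : A) =
      (2 * β) • seqDefect a 1 + β ^ 2 • (a (i + 1) + a (i - 1) : A) + c • (a i : A) := by
  obtain ⟨c, hc⟩ := (a i).2.exists_two_smul_mul_axisDefect (a (i + 1) : A)
  rw [ha.miyamoto_add, ha.axisDefect_add_one, mul_add, ha.mul_add_one, ha.mul_sub_one] at hc
  exact ⟨c + 2 * β ^ 2, by rw [hc]; module⟩

lemma exists_mul_mul_seqDefect_one (ha : IsReflectionSequence a) (i : ℤ) :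
    ∃ d c : F, (a i * ((a (i + 1) + a (i - 1)) * seqDefect a 1) : A) =
      d • ((2 : F) • seqDefect a 1 + β • (a (i + 1) + a (i - 1) : A)) + c • (a i : A) := by
  obtain ⟨d, c, h⟩ := (a i).2.exists_mul_mul_axisDefect (a (i + 1) : A)
  rw [ha.miyamoto_add, ha.axisDefect_add_one, mul_add _ (a (i + 1) : A), ha.mul_add_one,
    ha.mul_sub_one] at h
  exact ⟨d, c + 2 * β * d, by rw [h]; module⟩

omit [IsScalarTower F A A] in
lemma exists_two_smul_add_mul_seqDefect_one (ha : IsReflectionSequence a) (i : ℤ) :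
    ∃ c : F, (2 : F) • ((a (i + 1) + a (i - 1)) * seqDefect a 1 : A) = (4 * β) • seqDefect a 1 +
      β ^ 2 • (a (i + 2) + a (i - 2) : A) + (2 * β ^ 2) • (a i : A) +
        c • (a (i + 1) + a (i - 1) : A) := by
  obtain ⟨c, hsucc⟩ := ha.exists_two_smul_mul_seqDefect_one (i + 1)
  rw [add_assoc i, one_add_one_eq_two, add_sub_cancel_right] at hsucc
  have hpred := congrArg (a i).2.miyamoto hsucc
  simp only [map_add, map_smul, (a i).2.miyamoto_mul, ha.miyamoto_seqDefect_one,
    (a i).2.miyamoto_self, ha.miyamoto_add] at hpred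
  refine ⟨c, ?_⟩
  rw [add_mul, smul_add, hsucc, hpred]
  module

lemma exists_mul_add_two_add_sub_two (ha : IsReflectionSequence a) (hβ : β ≠ 0) (i : ℤ) :
    ∃ g h : F, (a i * (a (i + 2) + a (i - 2)) : A) =
      g • ((2 : F) • seqDefect a 1 + β • (a (i + 1) + a (i - 1) : A)) + h • (a i : A) := by
  obtain ⟨c₁, hs⟩ := ha.exists_two_smul_mul_seqDefect_one i
  obtain ⟨c₂, hqs⟩ := ha.exists_two_smul_add_mul_seqDefect_one i
  obtain ⟨d, c₃, haqs⟩ := ha.exists_mul_mul_seqDefect_one i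
  refine ⟨(2 * d - 2 * β ^ 2 - c₂) / β ^ 2,
    (2 * c₃ - 2 * β * c₁ - 2 * β ^ 2 - 2 * β * c₂) / β ^ 2, ?_⟩
  have h := congrArg ((a i : A) * ·) hqs
  simp only [mul_smul_comm, mul_add (a i : A), haqs, (a i).2.idem, ha.mul_add_one,
    ha.mul_sub_one] at h
  rw [mul_add]
  linear_combination (norm := skip) (β ^ 2)⁻¹ • (-h - (2 * β) • hs)
  match_scalars <;> field_simp <;> ring

lemma exists_two_smul_mul_add_two (ha : IsReflectionSequence a) (hβ : β ≠ 0) (i : ℤ) :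
    ∃ g h : F,
      (2 : F) • (a i * a (i + 2) : A) = β • (a (i + 2) - a (i - 2) : A) +
        g • ((2 : F) • seqDefect a 1 + β • (a (i + 1) + a (i - 1) : A)) + h • (a i : A) := by
  obtain ⟨g, h, hsum⟩ := ha.exists_mul_add_two_add_sub_two hβ i
  have hdiff := (a i).2.mul_sub_miyamoto (a (i + 2) : A)
  rw [ha.miyamoto_add, mul_sub] at hdiff
  rw [mul_add] at hsum
  exact ⟨g, h, by linear_combination (norm := module) hsum + hdiff⟩

lemma exists_add_six_eq (ha : IsReflectionSequence a) (hβ : β ≠ 0) (i : ℤ) :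
    ∃ c d : F, (a (i + 6) : A) =
      a i + c • (a (i + 4) - a (i + 2) : A) + d • (a (i + 5) - a (i + 1) : A) := by
  obtain ⟨g, h, h24⟩ := ha.exists_two_smul_mul_add_two hβ (i + 2)
  have h42 := congrArg (a (i + 3)).2.miyamoto h24
  simp only [map_add, map_sub, map_smul, (a (i + 3)).2.miyamoto_mul, ha.miyamoto_seqDefect_one,
    ha.miyamoto_apply] at h42
  ring_nf at h24 h42 ⊢
  refine ⟨h / β - 1, g, ?_⟩
  rw [mul_comm] at h42
  linear_combination (norm := skip) β⁻¹ • (h42 - h24)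
  match_scalars <;> field_simp <;> ring

lemma mem_of_forall_mem_Ico (ha : IsReflectionSequence a) (hβ : β ≠ 0) {V : Submodule F A} {k : ℤ}
    (hV : ∀ j ∈ Set.Ico k (k + 6), (a j : A) ∈ V) (i : ℤ) : (a i : A) ∈ V := by
  suffices h : ∀ j ∈ Set.Ico i (i + 6), (a j : A) ∈ V from h i (by simp)
  induction i using Int.inductionOn' (b := k) with
  | zero => exact hV
  | succ i _ ih =>
    intro j hj
    obtain rfl | hj' : j = i + 6 ∨ j ∈ Set.Ico i (i + 6) := by
      simp only [Set.mem_Ico] at hj ⊢; lia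
    · obtain ⟨c, d, hrec⟩ := ha.exists_add_six_eq hβ i
      rw [hrec]
      apply_rules only [add_mem, sub_mem, Submodule.smul_mem, ih] <;> simp
    · exact ih j hj'
  | pred i _ ih =>
    intro j hj
    obtain rfl | hj' : j = i - 1 ∨ j ∈ Set.Ico i (i + 6) := by
      simp only [Set.mem_Ico] at hj ⊢; lia
    · obtain ⟨c, d, hrec⟩ := ha.exists_add_six_eq hβ (i - 1)
      rw [add_assoc, ← sub_eq_iff_eq_add] at hrec
      rw [← hrec]
      apply_rules only [add_mem, sub_mem, Submodule.smul_mem, ih] <;>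
        simp only [Set.mem_Ico] <;> lia
    · exact ih j hj'

end IsReflectionSequence

end Sequence

section SpanningSet

open Submodule

variable {F A} {α β : F}

/-- The span of the axes of a sequence and `s_{0,1}`. -/
def axisSpan (a : ℤ → MonsterAxis A α β) : Submodule F A :=
  span F (Set.range (fun i ↦ (a i : A)) ∪ {seqDefect a 1})

/-- The span of the axes of a sequence, `s_{0,1}` and `s_{0,3}`. For type `(2β, β)` it turns out
to be the whole algebra. -/
def fullSpan (a : ℤ → MonsterAxis A α β) : Submodule F A :=
  axisSpan a ⊔ span F {seqDefect a 3}

section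

omit [IsScalarTower F A A]

lemma mem_axisSpan (a : ℤ → MonsterAxis A α β) (i : ℤ) : (a i : A) ∈ axisSpan a :=
  subset_span (.inl ⟨i, rfl⟩)

lemma seqDefect_one_mem_axisSpan (a : ℤ → MonsterAxis A α β) : seqDefect a 1 ∈ axisSpan a :=
  subset_span (.inr rfl)

lemma axisSpan_le_iff {a : ℤ → MonsterAxis A α β} {V : Submodule F A} :
    axisSpan a ≤ V ↔ (∀ i, (a i : A) ∈ V) ∧ seqDefect a 1 ∈ V := by
  rw [axisSpan, span_le, Set.union_subset_iff, Set.range_subset_iff, Set.singleton_subset_iff]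
  rfl

lemma fullSpan_le_iff {a : ℤ → MonsterAxis A α β} {V : Submodule F A} :
    fullSpan a ≤ V ↔ (∀ i, (a i : A) ∈ V) ∧ seqDefect a 1 ∈ V ∧ seqDefect a 3 ∈ V := by
  rw [fullSpan, sup_le_iff, axisSpan_le_iff, span_singleton_le_iff_mem, and_assoc]

lemma axisSpan_le_fullSpan (a : ℤ → MonsterAxis A α β) : axisSpan a ≤ fullSpan a :=
  le_sup_left

lemma mem_fullSpan (a : ℤ → MonsterAxis A α β) (i : ℤ) : (a i : A) ∈ fullSpan a :=
  axisSpan_le_fullSpan a (mem_axisSpan a i)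

lemma seqDefect_three_mem_fullSpan (a : ℤ → MonsterAxis A α β) : seqDefect a 3 ∈ fullSpan a :=
  mem_sup_right (mem_span_singleton_self _)

end

namespace IsReflectionSequence

variable {a : ℤ → MonsterAxis A (2 * β) β}

omit [IsScalarTower F A A] in
lemma mul_seqDefect_one_mem_axisSpan (ha : IsReflectionSequence a) (h2 : (2 : F) ≠ 0) (i : ℤ) :
    (a i * seqDefect a 1 : A) ∈ axisSpan a := by
  obtain ⟨c, h⟩ := ha.exists_two_smul_mul_seqDefect_one i
  rw [← smul_mem_iff _ h2, h]
  apply_rules [mem_axisSpan, seqDefect_one_mem_axisSpan, add_mem, smul_mem]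

lemma mul_mem_axisSpan_of_abs_sub_le (ha : IsReflectionSequence a) (hβ : β ≠ 0) (h2 : (2 : F) ≠ 0)
    {i j : ℤ} (hij : |j - i| ≤ 2) : (a i * a j : A) ∈ axisSpan a := by
  have mul_add_two_mem (i : ℤ) : (a i * a (i + 2) : A) ∈ axisSpan a := by
    obtain ⟨g, h, hprod⟩ := ha.exists_two_smul_mul_add_two hβ i
    rw [← smul_mem_iff _ h2, hprod]
    apply_rules [mem_axisSpan, seqDefect_one_mem_axisSpan, add_mem, sub_mem, smul_mem]
  have mul_add_one_mem (i : ℤ) : (a i * a (i + 1) : A) ∈ axisSpan a := by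
    rw [ha.mul_add_one]
    apply_rules [mem_axisSpan, seqDefect_one_mem_axisSpan, add_mem, smul_mem]
  obtain rfl | rfl | rfl | rfl | rfl :
      j = i ∨ j = i + 1 ∨ j = i + 2 ∨ i = j + 1 ∨ i = j + 2 := by grind
  · rw [(a j).2.idem]
    exact mem_axisSpan a j
  · exact mul_add_one_mem i
  · exact mul_add_two_mem i
  · rw [mul_comm (a (j + 1) : A)]
    exact mul_add_one_mem j
  · rw [mul_comm (a (j + 2) : A)]
    exact mul_add_two_mem j

lemma exists_add_mul_add_eq (ha : IsReflectionSequence a) (hβ : β ≠ 0) (h2 : (2 : F) ≠ 0)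
    (i : ℤ) : ∃ w ∈ axisSpan a, (a i * w : A) ∈ axisSpan a ∧
      ((a (i + 1) + a (i - 1)) * (a (i + 1) + a (i - 1)) : A) = w - β • (a (i - 3) : A) := by
  obtain ⟨g, h, hprod⟩ := ha.exists_two_smul_mul_add_two hβ (i - 1)
  rw [show i - 1 + 2 = i + 1 by ring, show i - 1 - 2 = i - 3 by ring, sub_add_cancel,
    show i - 1 - 1 = i - 2 by ring] at hprod
  refine ⟨(a (i + 1) + a (i - 1) : A) + β • (a (i + 1) : A) +
    g • ((2 : F) • seqDefect a 1 + β • (a i + a (i - 2) : A)) + h • (a (i - 1) : A), ?_, ?_, ?_⟩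
  · apply_rules [mem_axisSpan, seqDefect_one_mem_axisSpan, add_mem, smul_mem]
  · simp only [mul_add, mul_smul_comm]
    apply_rules [add_mem, smul_mem, ha.mul_seqDefect_one_mem_axisSpan h2,
      ha.mul_mem_axisSpan_of_abs_sub_le hβ h2] <;> grind
  · rw [mul_add, add_mul, add_mul, (a (i + 1)).2.idem, (a (i - 1)).2.idem,
      mul_comm (a (i + 1) : A)]
    linear_combination (norm := module) hprod

lemma four_smul_seqDefect_one_mul_self_sub_mem (ha : IsReflectionSequence a) (hβ : β ≠ 0)
    (h2 : (2 : F) ≠ 0) (i : ℤ) :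
    (4 : F) • (seqDefect a 1 * seqDefect a 1) - β ^ 2 • axisDefect β (a i : A) (a (i + 3)) ∈
      axisSpan a := by
  obtain ⟨w, hw, hiw, hqq⟩ := ha.exists_add_mul_add_eq hβ h2 i
  obtain ⟨c, d, d', h⟩ := (a i).2.exists_axisDefect_mul_axisDefect (a (i + 1) : A) (a (i + 1))
  rw [ha.miyamoto_add, ha.axisDefect_add_one, hqq, mul_sub, mul_smul_comm,
    mul_eq_axisDefect_add β (a i : A) (a (i - 3)), ha.axisDefect_sub, mul_add] at h
  have expand : (4 : F) • (seqDefect a 1 * seqDefect a 1) -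
        β ^ 2 • axisDefect β (a i : A) (a (i + 3)) =
      β ^ 2 • w - β • (a i * w : A) + (c + β ^ 3) • (a i : A) +
        (d + d') • (a i * a (i + 1) + a i * a (i - 1) : A) := by
    linear_combination (norm := module) h
  rw [expand]
  refine add_mem (add_mem (sub_mem (smul_mem _ _ hw) (smul_mem _ _ hiw))
    (smul_mem _ _ (mem_axisSpan a i))) (smul_mem _ _ (add_mem ?_ ?_)) <;>
  exact ha.mul_mem_axisSpan_of_abs_sub_le hβ h2 (by grind)

lemma axisDefect_add_three_sub_mem_axisSpan (ha : IsReflectionSequence a) (hβ : β ≠ 0)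
    (h2 : (2 : F) ≠ 0) (i : ℤ) :
    axisDefect β (a i : A) (a (i + 3)) - seqDefect a 3 ∈ axisSpan a := by
  rw [← smul_mem_iff _ (pow_ne_zero 2 hβ)]
  convert sub_mem (ha.four_smul_seqDefect_one_mul_self_sub_mem hβ h2 0)
    (ha.four_smul_seqDefect_one_mul_self_sub_mem hβ h2 i) using 1
  rw [zero_add, ← seqDefect]
  module

lemma axisDefect_mem_fullSpan_of_abs_sub_le (ha : IsReflectionSequence a) (hβ : β ≠ 0)
    (h2 : (2 : F) ≠ 0) {i j : ℤ} (hij : |j - i| ≤ 3) :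
    axisDefect β (a i : A) (a j) ∈ fullSpan a := by
  have defect_add_three_mem : axisDefect β (a i : A) (a (i + 3)) ∈ fullSpan a :=
    (sub_mem_iff_left _ (seqDefect_three_mem_fullSpan a)).1
      (axisSpan_le_fullSpan a (ha.axisDefect_add_three_sub_mem_axisSpan hβ h2 i))
  obtain rfl | rfl | hij : j = i + 3 ∨ j = i - 3 ∨ |j - i| ≤ 2 := by grind
  · exact defect_add_three_mem
  · rwa [ha.axisDefect_sub]
  · exact axisSpan_le_fullSpan a <| sub_mem (ha.mul_mem_axisSpan_of_abs_sub_le hβ h2 hij)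
      (smul_mem _ _ (add_mem (mem_axisSpan a i) (mem_axisSpan a j)))

lemma axis_mul_axis_mem_fullSpan (ha : IsReflectionSequence a) (hβ : β ≠ 0)
    (h2 : (2 : F) ≠ 0) (i j : ℤ) : (a i * a j : A) ∈ fullSpan a := by
  refine ha.mem_of_forall_mem_Ico hβ (V := (fullSpan a).comap (LinearMap.mulLeft F (a i : A)))
    (k := i - 3) (fun j hj ↦ ?_) j
  rw [mem_comap, LinearMap.mulLeft_apply, mul_eq_axisDefect_add β (a i : A)]
  exact add_mem (ha.axisDefect_mem_fullSpan_of_abs_sub_le hβ h2 (by grind))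
    (smul_mem _ _ (add_mem (mem_fullSpan a i) (mem_fullSpan a j)))

lemma seqDefect_mem_fullSpan (ha : IsReflectionSequence a) (hβ : β ≠ 0) (h2 : (2 : F) ≠ 0)
    (n : ℤ) : seqDefect a n ∈ fullSpan a :=
  sub_mem (ha.axis_mul_axis_mem_fullSpan hβ h2 0 n)
    (smul_mem _ _ (add_mem (mem_fullSpan a 0) (mem_fullSpan a n)))

lemma axis_mul_mem_fullSpan (ha : IsReflectionSequence a) (hβ : β ≠ 0) (h2 : (2 : F) ≠ 0)
    (i : ℤ) {x : A} (hx : x ∈ fullSpan a) : a i * x ∈ fullSpan a := by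
  have axisSpan_le : axisSpan a ≤ (fullSpan a).comap (LinearMap.mulLeft F (a i : A)) :=
    axisSpan_le_iff.2 ⟨ha.axis_mul_axis_mem_fullSpan hβ h2 i,
      axisSpan_le_fullSpan a (ha.mul_seqDefect_one_mem_axisSpan h2 i)⟩
  have mul_axisDefect_mem : a i * axisDefect β (a i : A) (a (i + 3)) ∈ fullSpan a := by
    obtain ⟨c, h⟩ := (a i).2.exists_two_smul_mul_axisDefect (a (i + 3) : A)
    rw [← smul_mem_iff _ h2, h, ha.miyamoto_add, mul_add]
    exact add_mem (smul_mem _ _ (add_mem (ha.axis_mul_axis_mem_fullSpan hβ h2 _ _)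
      (ha.axis_mul_axis_mem_fullSpan hβ h2 _ _))) (smul_mem _ _ (mem_fullSpan a i))
  have mul_sub_mem := axisSpan_le (ha.axisDefect_add_three_sub_mem_axisSpan hβ h2 i)
  rw [mem_comap, LinearMap.mulLeft_apply, mul_sub, sub_mem_iff_right _ mul_axisDefect_mem]
    at mul_sub_mem
  have fullSpan_le : fullSpan a ≤ (fullSpan a).comap (LinearMap.mulLeft F (a i : A)) :=
    sup_le axisSpan_le ((span_singleton_le_iff_mem _ _).2 mul_sub_mem)
  exact fullSpan_le hx

lemma seqDefect_mul_seqDefect_mem_fullSpan (ha : IsReflectionSequence a) (hβ : β ≠ 0)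
    (h2 : (2 : F) ≠ 0) (m n : ℤ) : seqDefect a m * seqDefect a n ∈ fullSpan a := by
  have h4 : (4 : F) ≠ 0 := by simpa [← two_add_two_eq_four, ← two_mul] using h2
  have sum_mem (k : ℤ) : (a k + a (2 * 0 - k) : A) ∈ fullSpan a :=
    add_mem (mem_fullSpan a _) (mem_fullSpan a _)
  have sum_mul_sum_mem : (a m + a (2 * 0 - m) : A) * (a n + a (2 * 0 - n)) ∈ fullSpan a := by
    rw [add_mul]
    exact add_mem (ha.axis_mul_mem_fullSpan hβ h2 _ (sum_mem n))
      (ha.axis_mul_mem_fullSpan hβ h2 _ (sum_mem n))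
  obtain ⟨c, d, d', h⟩ := (a 0).2.exists_axisDefect_mul_axisDefect (a m : A) (a n)
  rw [ha.miyamoto_apply, ha.miyamoto_apply] at h
  rw [← smul_mem_iff _ h4, seqDefect, seqDefect, eq_sub_of_add_eq h]
  apply_rules [sum_mul_sum_mem, sum_mem, ha.axis_mul_mem_fullSpan hβ h2,
    mem_fullSpan a 0, add_mem, sub_mem, smul_mem]

lemma mul_mem_fullSpan (ha : IsReflectionSequence a) (hβ : β ≠ 0) (h2 : (2 : F) ≠ 0)
    {x y : A} (hx : x ∈ fullSpan a) (hy : y ∈ fullSpan a) : x * y ∈ fullSpan a := by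
  have mul_mem_of_generators (z : A) (haxis : ∀ i, z * a i ∈ fullSpan a)
      (hdefect : ∀ n, z * seqDefect a n ∈ fullSpan a) {y : A} (hy : y ∈ fullSpan a) :
      z * y ∈ fullSpan a := by
    have fullSpan_le : fullSpan a ≤ (fullSpan a).comap (LinearMap.mulLeft F z) :=
      fullSpan_le_iff.2 ⟨haxis, hdefect 1, hdefect 3⟩
    exact fullSpan_le hy
  refine mul_mem_of_generators x (fun i ↦ ?_) (fun n ↦ ?_) hy
  · rw [mul_comm x]
    exact ha.axis_mul_mem_fullSpan hβ h2 i hx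
  · rw [mul_comm x]
    refine mul_mem_of_generators _ (fun i ↦ ?_)
      (ha.seqDefect_mul_seqDefect_mem_fullSpan hβ h2 n) hx
    rw [mul_comm (seqDefect a n)]
    exact ha.axis_mul_mem_fullSpan hβ h2 i (ha.seqDefect_mem_fullSpan hβ h2 n)

theorem fullSpan_eq_top (ha : IsReflectionSequence a) (hβ : β ≠ 0) (h2 : (2 : F) ≠ 0)
    (hgen : NonUnitalAlgebra.adjoin F {(a 0 : A), (a 1 : A)} = ⊤) : fullSpan a = ⊤ := by
  have adjoin_le : NonUnitalAlgebra.adjoin F {(a 0 : A), (a 1 : A)} ≤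
      (fullSpan a).toNonUnitalSubalgebra fun _ _ ↦ ha.mul_mem_fullSpan hβ h2 := by
    rw [NonUnitalAlgebra.adjoin_le_iff, Set.pair_subset_iff]
    exact ⟨mem_fullSpan a 0, mem_fullSpan a 1⟩
  exact eq_top_iff'.2 fun x ↦ adjoin_le (hgen ▸ NonUnitalAlgebra.mem_top)

theorem rank_fullSpan_le (ha : IsReflectionSequence a) (hβ : β ≠ 0) :
    Module.rank F (fullSpan a) ≤ 8 := by
  let b : Fin 8 → A := ![a 0, a 1, a 2, a 3, a 4, a 5, seqDefect a 1, seqDefect a 3]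
  have hb (k : Fin 8) : b k ∈ span F (Set.range b) := subset_span ⟨k, rfl⟩
  have axis_mem (i : ℤ) : (a i : A) ∈ span F (Set.range b) := by
    refine ha.mem_of_forall_mem_Ico hβ (k := 0) (fun j hj ↦ ?_) i
    obtain ⟨_, _⟩ := hj
    interval_cases j
    exacts [hb 0, hb 1, hb 2, hb 3, hb 4, hb 5]
  calc Module.rank F (fullSpan a)
      ≤ Module.rank F (span F (Set.range b)) :=
        rank_mono (fullSpan_le_iff.2 ⟨axis_mem, hb 6, hb 7⟩)
    _ ≤ Cardinal.mk (Set.range b) := rank_span_le _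
    _ ≤ 8 := by simpa using Cardinal.mk_range_le_lift (f := b)

end IsReflectionSequence

end SpanningSet

theorem dimension_bound_two_beta
    (hchar : ringChar F ≠ 2) (β : F)
    (hβ0 : β ≠ 0) (hβ1 : β ≠ 1) (h2β0 : 2 * β ≠ 0) (h2β1 : 2 * β ≠ 1) (h2ββ : 2 * β ≠ β)
    (hgen : IsTwoGeneratedMonsterType F A (2 * β) β) :
    Module.rank F A ≤ 8 := by
  have h2 : (2 : F) ≠ 0 := left_ne_zero_of_mul h2β0
  obtain ⟨e, f, he, hf, hgen⟩ := hgen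
  obtain ⟨a, ha, ha0, ha1⟩ := exists_isReflectionSequence MonsterAxis.isInvolutory ⟨e, he⟩ ⟨f, hf⟩
  have htop : fullSpan a = ⊤ := ha.fullSpan_eq_top hβ0 h2 (by rw [ha0, ha1, hgen])
  calc Module.rank F A = Module.rank F (fullSpan a) := by rw [htop, rank_top]
    _ ≤ 8 := ha.rank_fullSpan_le hβ0
end

section
/- Let F be a field with char F ≠ 2 and let H be the Highwater algebra over F. The F-linear map σ : H → H determined by σ(a_j) = a_{1−j} for all j ∈ ℤ and σ(s_j) = s_j for all j ≥ 1 is an algebra automorphism of H of order 2 which interchanges the axes a_0 and a_1. -/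
/- STATEMENT 7: the map σ : a_j ↦ a_{1-j}, s_j ↦ s_j is an algebra automorphism of\nthe Highwater algebra of order 2 interchanging a_0 and a_1. -/

/-- The underlying vector space of the Highwater algebra: formal `F`-linear combinations
of basis elements `a_i` (`i : ℤ`, encoded `Sum.inl i`) and `s_j` (`j ≥ 1`, encoded
`Sum.inr (j - 1)`). -/
abbrev HW (F : Type*) [Field F] := (ℤ ⊕ ℕ) →₀ F

variable (F : Type*) [Field F]

/-- The axis `a_i` of the Highwater algebra. -/
noncomputable def hwa (i : ℤ) : HW F := Finsupp.single (Sum.inl i) 1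

/-- The element `s_j` of the Highwater algebra (`s_0 = 0`). -/
noncomputable def hws : ℕ → HW F
  | 0 => 0
  | j + 1 => Finsupp.single (Sum.inr j) 1

/-- Product of two basis elements of the Highwater algebra:
`a_i · a_k = (1/2)(a_i + a_k) + s_{|i-k|}`,
`a_i · s_j = -(3/4) a_i + (3/8)(a_{i-j} + a_{i+j}) + (3/2) s_j`,
`s_j · s_k = (3/4)(s_j + s_k) - (3/8)(s_{|j-k|} + s_{j+k})`. -/
noncomputable def hwBM : ℤ ⊕ ℕ → ℤ ⊕ ℕ → HW F
  | Sum.inl i, Sum.inl k => ((1 : F) / 2) • (hwa F i + hwa F k) + hws F (i - k).natAbs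
  | Sum.inl i, Sum.inr j =>
      (-(3 : F) / 4) • hwa F i
        + ((3 : F) / 8) • (hwa F (i - ((j : ℤ) + 1)) + hwa F (i + ((j : ℤ) + 1)))
        + ((3 : F) / 2) • hws F (j + 1)
  | Sum.inr j, Sum.inl i =>
      (-(3 : F) / 4) • hwa F i
        + ((3 : F) / 8) • (hwa F (i - ((j : ℤ) + 1)) + hwa F (i + ((j : ℤ) + 1)))
        + ((3 : F) / 2) • hws F (j + 1)
  | Sum.inr j, Sum.inr k =>
      ((3 : F) / 4) • (hws F (j + 1) + hws F (k + 1))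
        - ((3 : F) / 8) • (hws F ((j : ℤ) - (k : ℤ)).natAbs + hws F (j + k + 2))

/-- The multiplication of the Highwater algebra: the bilinear extension of `hwBM`. -/
noncomputable def hwMul (x y : HW F) : HW F :=
  x.sum fun i ci => y.sum fun j cj => (ci * cj) • hwBM F i j

/-!
The product of the Highwater algebra only sees the metric of `ℤ`: it involves the indices of the
axes through the distances `|i - k|` and through the pairs `{i - j, i + j}` of points at distance
`j` from `i`, and an isometry of `ℤ` preserves both. Hence every isometry of `ℤ` induces an
algebra endomorphism fixing all `s_j`, functorially; `σ` is induced by the reflection `j ↦ 1 - j`.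
-/

section IntIsometry

variable {f : ℤ → ℤ}

theorem natAbs_sub_of_isometry (hf : Isometry f) (i k : ℤ) :
    (f i - f k).natAbs = (i - k).natAbs := by
  have hdist := hf.dist_eq i k
  rw [Int.dist_eq', Int.dist_eq', Int.cast_inj] at hdist
  exact Int.natAbs_eq_natAbs_iff.mpr (abs_eq_abs.mp hdist)

theorem isometry_apply_sub_add_eq_or_eq (hf : Isometry f) (i j : ℤ) :
    f (i - j) = f i - j ∧ f (i + j) = f i + j ∨ f (i - j) = f i + j ∧ f (i + j) = f i - j := by
  have hsub := natAbs_sub_of_isometry hf (i - j) i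
  have hadd := natAbs_sub_of_isometry hf (i + j) i
  have hends := natAbs_sub_of_isometry hf (i - j) (i + j)
  omega

theorem hwa_sub_add_hwa_add_of_isometry (hf : Isometry f) (i j : ℤ) :
    hwa F (f (i - j)) + hwa F (f (i + j)) = hwa F (f i - j) + hwa F (f i + j) := by
  obtain ⟨hsub, hadd⟩ | ⟨hsub, hadd⟩ := isometry_apply_sub_add_eq_or_eq hf i j
  · rw [hsub, hadd]
  · rw [hsub, hadd, add_comm]

end IntIsometry

theorem hwa_injective : Function.Injective (hwa F) :=
  (Finsupp.single_left_injective one_ne_zero).comp Sum.inl_injective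

/-- The linear endomorphism of the Highwater algebra that a map `f` of the indices of the axes
induces: it sends `a_j` to `a_{f j}` and fixes every `s_j`. The symmetry `σ` is the case
`f j = 1 - j`. -/
noncomputable def hwMap (f : ℤ → ℤ) : HW F →ₗ[F] HW F :=
  Finsupp.lmapDomain F F (Sum.map f id)

@[simp]
theorem hwMap_hwa (f : ℤ → ℤ) (j : ℤ) : hwMap F f (hwa F j) = hwa F (f j) := by
  simp [hwMap, hwa]

@[simp]
theorem hwMap_hws (f : ℤ → ℤ) (j : ℕ) : hwMap F f (hws F j) = hws F j := by
  cases j <;> simp [hwMap, hws]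

theorem hwMap_id : hwMap F id = LinearMap.id := by
  rw [hwMap, Sum.map_id_id, Finsupp.lmapDomain_id]

theorem hwMap_comp (f g : ℤ → ℤ) : hwMap F (f ∘ g) = hwMap F f ∘ₗ hwMap F g := by
  rw [hwMap, hwMap, hwMap, ← Finsupp.lmapDomain_comp, Sum.map_comp_map, Function.comp_id]

theorem hwMap_involutive {f : ℤ → ℤ} (hf : Function.Involutive f) :
    Function.Involutive (hwMap F f) := fun x => by
  rw [← LinearMap.comp_apply, ← hwMap_comp, hf.comp_self, hwMap_id, LinearMap.id_apply]

theorem hwMap_injective : Function.Injective (hwMap F) := fun f g hfg =>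
  funext fun j => hwa_injective F <| by rw [← hwMap_hwa, hfg, hwMap_hwa]

theorem hwMap_hwBM {f : ℤ → ℤ} (hf : Isometry f) (p q : ℤ ⊕ ℕ) :
    hwMap F f (hwBM F p q) = hwBM F (Sum.map f id p) (Sum.map f id q) := by
  rcases p with i | j <;> rcases q with k | l <;>
    simp only [hwBM, map_add, map_sub, map_smul, hwMap_hwa, hwMap_hws, Sum.map_inl, Sum.map_inr,
      id, natAbs_sub_of_isometry hf, ← hwa_sub_add_hwa_add_of_isometry F hf]

theorem hwMap_hwMul {f : ℤ → ℤ} (hf : Isometry f) (x y : HW F) :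
    hwMap F f (hwMul F x y) = hwMul F (hwMap F f x) (hwMap F f y) := by
  have hinj : Function.Injective (Sum.map f (id : ℕ → ℕ)) :=
    hf.injective.sumMap Function.injective_id
  calc hwMap F f (hwMul F x y)
      = x.sum fun p c => y.sum fun q d =>
          (c * d) • hwBM F (Sum.map f id p) (Sum.map f id q) := by
        simp only [hwMul, map_finsuppSum, map_smul, hwMap_hwBM F hf]
    _ = hwMul F (hwMap F f x) (hwMap F f y) := by
        simp only [hwMul, hwMap, Finsupp.lmapDomain_apply, Finsupp.sum_mapDomain_index_inj hinj]

theorem highwater_extra_symmetry (h2 : ringChar F ≠ 2) :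
    ∃ T : HW F →ₗ[F] HW F,
      (∀ j : ℤ, T (hwa F j) = hwa F (1 - j)) ∧
      (∀ j : ℕ, 1 ≤ j → T (hws F j) = hws F j) ∧
      (∀ x y : HW F, T (hwMul F x y) = hwMul F (T x) (T y)) ∧
      (∀ x : HW F, T (T x) = x) ∧
      T ≠ LinearMap.id ∧
      T (hwa F 0) = hwa F 1 ∧ T (hwa F 1) = hwa F 0 := by
  have hisometry : Isometry fun j : ℤ => 1 - j := (IsometryEquiv.subLeft 1).isometry
  have hinvolutive : Function.Involutive fun j : ℤ => 1 - j := sub_sub_cancel 1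
  have hne_id : (fun j : ℤ => 1 - j) ≠ id := fun h => by simpa using congrFun h 0
  exact ⟨hwMap F fun j => 1 - j, hwMap_hwa F _, fun j _ => hwMap_hws F _ j,
    hwMap_hwMul F hisometry, hwMap_involutive F hinvolutive,
    hwMap_id F ▸ (hwMap_injective F).ne hne_id, by simp, by simp⟩
end
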